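/- Let Ω ⊂ ℝⁿ be a bounded domain with C^{1,1} boundary, and φ ∈ H²(Ω) ∩ H₀¹(Ω) with φ ≠ 0 in the interior of Ω and |∇φ| ≥ m > 0 on ∂Ω. Then there exists a constant C > 0, depending only on Ω and m, such that the perimeter of the zero level set of φ satisfies ∫_Ω δ(φ)|∇φ| dx ≤ C ∫_Ω |Δφ|² dx. -/

import Mathlib

open MeasureTheory

noncomputable def laplacian {n : ℕ} (f : EuclideanSpace ℝ (Fin n) → ℝ)
    (x : EuclideanSpace ℝ (Fin n)) : ℝ :=
  ∑ i : Fin n,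
    iteratedFDeriv ℝ 2 f x ![EuclideanSpace.single i 1, EuclideanSpace.single i 1]

/-!
The zero set of `φ` in the closure of `Ω` is `∂Ω`, a compact piece of a regular level set of `φ`, so
its `(n - 1)`-dimensional Hausdorff measure is finite. Hence it suffices to bound `∫_Ω |Δφ|²` from
below by a positive constant depending only on `Ω` and `m`.

Let `g` be a smooth truncation of the sign function that vanishes near `0`. Then `g ∘ φ` vanishes
near `∂Ω`, and testing `Δφ` against it gives `∫_Ω g'(φ)|∇φ|² = -∫_Ω g(φ)Δφ ≤ ∫_Ω |Δφ|`. Testing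
the field `x ↦ x`, of divergence `n`, against `g(φ)²` gives
`n ∫_Ω g(φ)² = -2 ∫_Ω g(φ)g'(φ) ∇φ·x ≤ 2R ∫_Ω g'(φ)|∇φ|`. If `g' = 0` away from a small
neighbourhood of `0`, then `|∇φ| ≥ m/2` wherever `g'(φ) ≠ 0`, and the two estimates combine to
`m n ∫_Ω g(φ)² ≤ 4R ∫_Ω |Δφ|`. As `g` tends to the sign function this becomes
`m n |Ω| ≤ 4R ∫_Ω |Δφ|`, and Jensen's inequality concludes.
-/

open Set Filter Topology Module Metric
open InnerProductSpace (toDual toDual_symm_apply laplacian_eq_iteratedFDeriv_stdOrthonormalBasis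
  laplacian_eq_iteratedFDeriv_orthonormalBasis)

section RegularLevelSet

variable {E F : Type*} [NormedAddCommGroup E] [NormedSpace ℝ E] [FiniteDimensional ℝ E]
  [MeasurableSpace E] [BorelSpace E] [NormedAddCommGroup F] [NormedSpace ℝ F]
  [FiniteDimensional ℝ F] {f : E → F}

theorem exists_mem_nhds_hausdorffMeasure_inter_preimage_lt_top {L : E →L[ℝ] F} {a : E}
    (hf : HasStrictFDerivAt f L a) (hL : L.range = ⊤) :
    ∃ U ∈ 𝓝 a, μH[finrank ℝ L.ker] (U ∩ f ⁻¹' {f a}) < ⊤ := by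
  set ψ := hf.implicitFunction f L hL (f a)
  set Φ := hf.implicitToOpenPartialHomeomorph f L hL
  obtain ⟨C, s, hs, hψ⟩ := (hf.to_implicitFunction hL).exists_lipschitzOnWith
  obtain ⟨ρ, hρ, hρs⟩ := nhds_basis_closedBall.mem_iff.1 hs
  have hΦ : Tendsto (fun x => (Φ x).2) (𝓝 a) (𝓝 0) := by
    have := (Φ.continuousAt (hf.mem_implicitToOpenPartialHomeomorph_source hL)).snd
    rwa [ContinuousAt, hf.implicitToOpenPartialHomeomorph_self hL] at this
  refine ⟨{x | ψ (Φ x).2 = x ∨ f x ≠ f a} ∩ {x | (Φ x).2 ∈ closedBall 0 ρ},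
    inter_mem ?_ (hΦ (closedBall_mem_nhds 0 hρ)), ?_⟩
  · filter_upwards [hf.eq_implicitFunction hL] with x hx
    by_cases hxa : f x = f a
    · exact Or.inl (by rwa [hxa] at hx)
    · exact Or.inr hxa
  have hfin : μH[finrank ℝ L.ker] (ψ '' closedBall 0 ρ) < ⊤ :=
    ((hψ.mono hρs).hausdorffMeasure_image_le (Nat.cast_nonneg _)).trans_lt
      (ENNReal.mul_lt_top (by simp) (isCompact_closedBall 0 ρ).measure_lt_top)
  refine (measure_mono ?_).trans_lt hfin
  rintro x ⟨⟨hx | hx, hxρ⟩, hxa⟩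
  · exact ⟨_, hxρ, hx⟩
  · exact absurd hxa hx

theorem hausdorffMeasure_lt_top_of_isCompact_of_subset_preimage {f' : E → E →L[ℝ] F} {K : Set E}
    {c : F} (hK : IsCompact K) (hKc : K ⊆ f ⁻¹' {c})
    (hf : ∀ x ∈ K, HasStrictFDerivAt f (f' x) x) (hf' : ∀ x ∈ K, (f' x).range = ⊤) :
    μH[(finrank ℝ E : ℝ) - finrank ℝ F] K < ⊤ := by
  refine hK.measure_lt_top_of_nhdsWithin fun x hx => ?_
  obtain ⟨U, hU, hfin⟩ :=
    exists_mem_nhds_hausdorffMeasure_inter_preimage_lt_top (hf x hx) (hf' x hx)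
  have hdim : (finrank ℝ (f' x).ker : ℝ) = finrank ℝ E - finrank ℝ F := by
    have h := LinearMap.finrank_range_add_finrank_ker (f' x : E →ₗ[ℝ] F)
    rw [hf' x hx, finrank_top] at h
    rw [← h, Nat.cast_add, add_sub_cancel_left]
  rw [hdim] at hfin
  refine ⟨U ∩ K, inter_mem (mem_nhdsWithin_of_mem_nhds hU) self_mem_nhdsWithin,
    (measure_mono ?_).trans_lt hfin⟩
  rw [hKc hx]
  exact inter_subset_inter_right U hKc

end RegularLevelSet

section Divergence

variable {E : Type*} [NormedAddCommGroup E] [NormedSpace ℝ E] [FiniteDimensional ℝ E] {X : E → E}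

/-- The divergence of a vector field on a finite-dimensional space, as the trace of its
derivative. -/
noncomputable def divergence (X : E → E) (x : E) : ℝ :=
  LinearMap.trace ℝ E (fderiv ℝ X x)

theorem divergence_id (x : E) : divergence (id : E → E) x = finrank ℝ E := by
  rw [divergence, fderiv_id]
  exact LinearMap.trace_id ℝ E

theorem divergence_eq_sum_fderiv_coord {ι : Type*} [Fintype ι] (b : Basis ι ℝ E) {x : E}
    (hX : DifferentiableAt ℝ X x) :
    divergence X x = ∑ i, fderiv ℝ (fun y => b.coord i (X y)) x (b i) := by
  classical
  rw [divergence, LinearMap.trace_eq_matrix_trace ℝ b]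
  refine Finset.sum_congr rfl fun i _ => ?_
  have h := (b.coord i).toContinuousLinearMap.hasFDerivAt.comp x hX.hasFDerivAt
  rw [Matrix.diag_apply, LinearMap.toMatrix_apply]
  exact (DFunLike.congr_fun h.fderiv (b i)).symm

theorem continuous_divergence (hX : ContDiff ℝ 1 X) : Continuous (divergence X) :=
  ((LinearMap.trace ℝ E ∘ₗ ContinuousLinearMap.coeLM ℝ).continuous_of_finiteDimensional).comp
    (hX.continuous_fderiv one_ne_zero)

variable [MeasurableSpace E] [BorelSpace E] (μ : Measure E) [μ.IsAddHaarMeasure]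

theorem integral_fderiv_apply_eq_neg_integral_mul_divergence {F : E → ℝ} (hF : ContDiff ℝ 1 F)
    (hFsupp : HasCompactSupport F) (hX : ContDiff ℝ 1 X) :
    ∫ x, fderiv ℝ F x (X x) ∂μ = -∫ x, F x * divergence X x ∂μ := by
  set b := finBasis ℝ E
  set X' := fun i x => b.coord i (X x)
  have hX' (i) : ContDiff ℝ 1 (X' i) := (b.coord i).toContinuousLinearMap.contDiff.comp hX
  have hDF (i) : Integrable (fun x => fderiv ℝ F x (b i) * X' i x) μ :=
    (((hF.continuous_fderiv one_ne_zero).clm_apply continuous_const).mul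
      (hX' i).continuous).integrable_of_hasCompactSupport (hFsupp.fderiv_apply ℝ _).mul_right
  have hDX (i) : Integrable (fun x => F x * fderiv ℝ (X' i) x (b i)) μ :=
    (hF.continuous.mul (((hX' i).continuous_fderiv one_ne_zero).clm_apply
      continuous_const)).integrable_of_hasCompactSupport hFsupp.mul_right
  have hparts (i) :
      ∫ x, F x * fderiv ℝ (X' i) x (b i) ∂μ = -∫ x, fderiv ℝ F x (b i) * X' i x ∂μ :=
    integral_mul_fderiv_eq_neg_fderiv_mul_of_integrable (hDF i) (hDX i)
      ((hF.continuous.mul (hX' i).continuous).integrable_of_hasCompactSupport hFsupp.mul_right)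
      (fun x _ => hF.differentiable one_ne_zero x)
      (fun x _ => (hX' i).differentiable one_ne_zero x)
  have happly (x) : fderiv ℝ F x (X x) = ∑ i, fderiv ℝ F x (b i) * X' i x := by
    conv_lhs => rw [← b.sum_repr (X x), map_sum]
    simp only [map_smul, smul_eq_mul, mul_comm, X', Basis.coord_apply]
  have hdiv (x) : F x * divergence X x = ∑ i, F x * fderiv ℝ (X' i) x (b i) := by
    rw [divergence_eq_sum_fderiv_coord b (hX.differentiable one_ne_zero x), Finset.mul_sum]
  simp only [happly, hdiv]
  rw [integral_finsetSum _ fun i _ => hDF i, integral_finsetSum _ fun i _ => hDX i,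
    Finset.sum_congr rfl fun i _ => hparts i, Finset.sum_neg_distrib, neg_neg]

end Divergence

theorem integrableOn_of_continuous_of_isBounded {X E : Type*} [MetricSpace X] [ProperSpace X]
    [MeasurableSpace X] [OpensMeasurableSpace X] [NormedAddCommGroup E] {μ : Measure X}
    [IsFiniteMeasureOnCompacts μ] {f : X → E} {s : Set X} (hf : Continuous f)
    (hs : Bornology.IsBounded s) : IntegrableOn f s μ :=
  (hf.continuousOn.integrableOn_compact hs.isCompact_closure).mono_set subset_closure

section InnerRegularity

variable {X : Type*} [TopologicalSpace X] [MeasurableSpace X] {μ : Measure X} [μ.Regular]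

theorem mul_measureReal_le_of_forall_isCompact {U : Set X} (hU : IsOpen U) {a b : ℝ} (ha : 0 ≤ a)
    (h : ∀ K ⊆ U, IsCompact K → a * μ.real K ≤ b) : a * μ.real U ≤ b := by
  have hb : 0 ≤ b := by simpa using h ∅ (empty_subset U) isCompact_empty
  rcases ha.eq_or_lt with rfl | ha
  · simpa using hb
  · rw [← le_div_iff₀' ha]
    refine ENNReal.toReal_le_of_le_ofReal (by positivity) ?_
    rw [hU.measure_eq_iSup_isCompact]
    refine iSup₂_le fun K hKU => iSup_le fun hK => ?_
    rw [← ofReal_measureReal hK.measure_ne_top]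
    exact ENNReal.ofReal_le_ofReal ((le_div_iff₀' ha).2 (h K hKU hK))

end InnerRegularity

theorem sq_integral_le_measureReal_univ_mul_integral_sq {X : Type*} [MeasurableSpace X]
    {μ : Measure X} [IsFiniteMeasure μ] {f : X → ℝ} (hf : MemLp f 2 μ) :
    (∫ x, f x ∂μ) ^ 2 ≤ μ.real univ * ∫ x, f x ^ 2 ∂μ := by
  rcases eq_zero_or_neZero μ with rfl | _
  · simp
  have hμ : 0 < μ.real univ := measureReal_univ_pos
  have hJensen : (⨍ x, f x ∂μ) ^ 2 ≤ ⨍ x, f x ^ 2 ∂μ :=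
    even_two.convexOn_pow.map_average_le (continuous_pow 2).continuousOn isClosed_univ (by simp)
      (hf.integrable one_le_two) hf.integrable_sq
  rw [average_eq, average_eq, smul_eq_mul, smul_eq_mul] at hJensen
  field_simp at hJensen
  exact hJensen

section SignTruncation

open Real (smoothTransition)

variable {ε t : ℝ}

/-- An odd smooth approximation of the sign function that vanishes on `[-ε, ε]` and equals `±1`
outside `(-2ε, 2ε)`. Composed with a function vanishing on `∂Ω`, it yields test functions that
vanish near `∂Ω`. -/
noncomputable def signTruncation (ε t : ℝ) : ℝ :=
  smoothTransition (t / ε - 1) - smoothTransition (-t / ε - 1)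

theorem contDiff_signTruncation {n : ℕ∞} : ContDiff ℝ n (signTruncation ε) :=
  (smoothTransition.contDiff.comp (by fun_prop)).sub (smoothTransition.contDiff.comp (by fun_prop))

theorem monotone_signTruncation (hε : 0 ≤ ε) : Monotone (signTruncation ε) := fun s t hst =>
  sub_le_sub (smoothTransition.monotone (by gcongr)) (smoothTransition.monotone (by gcongr))

theorem signTruncation_neg : signTruncation ε (-t) = -signTruncation ε t := by
  rw [signTruncation, signTruncation, neg_neg, neg_sub]

theorem abs_signTruncation_le_one : |signTruncation ε t| ≤ 1 :=
  abs_sub_le_of_nonneg_of_le (smoothTransition.nonneg _) (smoothTransition.le_one _)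
    (smoothTransition.nonneg _) (smoothTransition.le_one _)

theorem signTruncation_eq_zero_of_abs_le (hε : 0 < ε) (ht : |t| ≤ ε) : signTruncation ε t = 0 := by
  have hzero {s : ℝ} (hs : s ≤ ε) : smoothTransition (s / ε - 1) = 0 :=
    smoothTransition.zero_of_nonpos (by rwa [sub_nonpos, div_le_one hε])
  rw [signTruncation, hzero (le_of_abs_le ht), hzero (neg_le_of_neg_le (neg_le_of_abs_le ht)),
    sub_zero]

theorem signTruncation_eq_one_of_le (hε : 0 < ε) (ht : 2 * ε ≤ t) : signTruncation ε t = 1 := by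
  rw [signTruncation, smoothTransition.one_of_one_le, smoothTransition.zero_of_nonpos, sub_zero]
  · rw [sub_nonpos, div_le_one hε]
    linarith
  · rw [le_sub_iff_add_le, le_div_iff₀ hε]
    linarith

theorem signTruncation_sq_eq_one_of_le_abs (hε : 0 < ε) (ht : 2 * ε ≤ |t|) :
    signTruncation ε t ^ 2 = 1 := by
  rcases le_abs.1 ht with ht | ht
  · rw [signTruncation_eq_one_of_le hε ht, one_pow]
  · rw [← neg_sq, ← signTruncation_neg, signTruncation_eq_one_of_le hε ht, one_pow]

theorem deriv_signTruncation_eq_zero_of_le_abs (hε : 0 < ε) (ht : 2 * ε ≤ |t|) :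
    deriv (signTruncation ε) t = 0 := by
  rcases sq_eq_one_iff.1 (signTruncation_sq_eq_one_of_le_abs hε ht) with h | h
  · refine IsLocalMax.deriv_eq_zero (.of_forall fun s => ?_)
    exact h ▸ (le_of_abs_le abs_signTruncation_le_one)
  · refine IsLocalMin.deriv_eq_zero (.of_forall fun s => ?_)
    exact h ▸ (neg_le_of_abs_le abs_signTruncation_le_one)

end SignTruncation

section GreenIdentity

theorem indicator_comp_eventuallyEq_zero {X : Type*} [TopologicalSpace X] {Ω : Set X} {φ : X → ℝ}
    {g : ℝ → ℝ} {x : X} (hΩ : IsOpen Ω) (hφ : Continuous φ)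
    (hφ0 : ∀ x ∈ frontier Ω, φ x = 0) (hg0 : g =ᶠ[𝓝 0] 0) (hx : x ∉ Ω) :
    Ω.indicator (g ∘ φ) =ᶠ[𝓝 x] 0 := by
  by_cases hxc : x ∈ closure Ω
  · have hφx : Tendsto φ (𝓝 x) (𝓝 0) :=
      hφ0 x (hΩ.frontier_eq ▸ ⟨hxc, hx⟩) ▸ hφ.continuousAt
    filter_upwards [hφx hg0] with y hy
    exact indicator_apply_eq_zero.2 fun _ => hy
  · filter_upwards [isClosed_closure.isOpen_compl.mem_nhds hxc] with y hy
    exact indicator_of_notMem (fun h => hy (subset_closure h)) _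

variable {E : Type*} [NormedAddCommGroup E] [NormedSpace ℝ E] {Ω : Set E} {φ : E → ℝ} {g : ℝ → ℝ}

theorem contDiff_indicator_comp (hΩ : IsOpen Ω) (hφ : ContDiff ℝ 1 φ)
    (hφ0 : ∀ x ∈ frontier Ω, φ x = 0) (hg : ContDiff ℝ 1 g) (hg0 : g =ᶠ[𝓝 0] 0) :
    ContDiff ℝ 1 (Ω.indicator (g ∘ φ)) := by
  refine contDiff_iff_contDiffAt.2 fun x => ?_
  by_cases hx : x ∈ Ω
  · exact (hg.comp hφ).contDiffAt.congr_of_eventuallyEq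
      (eqOn_indicator.eventuallyEq_of_mem (hΩ.mem_nhds hx))
  · exact contDiffAt_const.congr_of_eventuallyEq
      (indicator_comp_eventuallyEq_zero hΩ hφ.continuous hφ0 hg0 hx)

theorem fderiv_indicator_comp_apply (hΩ : IsOpen Ω) (hφ : ContDiff ℝ 1 φ)
    (hφ0 : ∀ x ∈ frontier Ω, φ x = 0) (hg : ContDiff ℝ 1 g) (hg0 : g =ᶠ[𝓝 0] 0) (x v : E) :
    fderiv ℝ (Ω.indicator (g ∘ φ)) x v =
      Ω.indicator (fun y => deriv g (φ y) * fderiv ℝ φ y v) x := by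
  by_cases hx : x ∈ Ω
  · have hderiv := (hg.differentiable one_ne_zero (φ x)).hasDerivAt.comp_hasFDerivAt x
      (hφ.differentiable one_ne_zero x).hasFDerivAt
    rw [(eqOn_indicator.eventuallyEq_of_mem (hΩ.mem_nhds hx)).fderiv_eq, hderiv.fderiv,
      indicator_of_mem hx, smul_apply, smul_eq_mul]
  · rw [(indicator_comp_eventuallyEq_zero hΩ hφ.continuous hφ0 hg0 hx).fderiv_eq,
      indicator_of_notMem hx, fderiv_zero, Pi.zero_apply, zero_apply]

variable [FiniteDimensional ℝ E] [MeasurableSpace E] [BorelSpace E] (μ : Measure E)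
  [μ.IsAddHaarMeasure] {X : E → E}

theorem setIntegral_deriv_comp_mul_fderiv_apply (hΩ : IsOpen Ω) (hΩb : Bornology.IsBounded Ω)
    (hφ : ContDiff ℝ 1 φ) (hφ0 : ∀ x ∈ frontier Ω, φ x = 0) (hg : ContDiff ℝ 1 g)
    (hg0 : g =ᶠ[𝓝 0] 0) (hX : ContDiff ℝ 1 X) :
    ∫ x in Ω, deriv g (φ x) * fderiv ℝ φ x (X x) ∂μ = -∫ x in Ω, g (φ x) * divergence X x ∂μ := by
  have hsupp : HasCompactSupport (Ω.indicator (g ∘ φ)) :=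
    .intro hΩb.isCompact_closure fun x hx => indicator_of_notMem (fun h => hx (subset_closure h)) _
  have h := integral_fderiv_apply_eq_neg_integral_mul_divergence μ
    (contDiff_indicator_comp hΩ hφ hφ0 hg hg0) hsupp hX
  rw [← integral_indicator hΩ.measurableSet, ← integral_indicator hΩ.measurableSet]
  convert h using 3 with x x
  · rw [fderiv_indicator_comp_apply hΩ hφ hφ0 hg hg0]
    rfl
  · exact funext fun x => indicator_mul_left Ω (g ∘ φ) (divergence X)

theorem finrank_mul_setIntegral_sq_comp (hΩ : IsOpen Ω) (hΩb : Bornology.IsBounded Ω)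
    (hφ : ContDiff ℝ 1 φ) (hφ0 : ∀ x ∈ frontier Ω, φ x = 0) (hg : ContDiff ℝ 1 g)
    (hg0 : g =ᶠ[𝓝 0] 0) :
    finrank ℝ E * ∫ x in Ω, g (φ x) ^ 2 ∂μ =
      -∫ x in Ω, 2 * g (φ x) * deriv g (φ x) * fderiv ℝ φ x x ∂μ := by
  have hderiv (t : ℝ) : deriv (fun t => g t ^ 2) t = 2 * g t * deriv g t := by
    simp [deriv_fun_pow (hg.differentiable one_ne_zero t)]
  have h := setIntegral_deriv_comp_mul_fderiv_apply μ hΩ hΩb hφ hφ0 (hg.pow 2)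
    (hg0.mono fun t ht => by simp [ht]) contDiff_id
  simp only [hderiv, divergence_id, id_eq] at h
  rw [h, integral_mul_const, neg_neg, mul_comm]

end GreenIdentity

section Laplacian

open scoped Laplacian Gradient

variable {E : Type*} [NormedAddCommGroup E] [InnerProductSpace ℝ E]

section Gradient

variable [CompleteSpace E] {φ : E → ℝ}

theorem norm_gradient_eq_norm_fderiv (φ : E → ℝ) (x : E) : ‖∇ φ x‖ = ‖fderiv ℝ φ x‖ :=
  (toDual ℝ E).symm.norm_map _

theorem contDiff_gradient {n : WithTop ℕ∞} (hφ : ContDiff ℝ (n + 1) φ) : ContDiff ℝ n (∇ φ) :=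
  (toDual ℝ E).symm.contDiff.comp (hφ.fderiv_right le_rfl)

theorem fderiv_apply_gradient (φ : E → ℝ) (x : E) : fderiv ℝ φ x (∇ φ x) = ‖∇ φ x‖ ^ 2 := by
  rw [← inner_gradient_left, real_inner_self_eq_norm_sq]

theorem mul_neg_fderiv_apply_self_le {a b l R : ℝ} {x : E} (ha : |a| ≤ 1) (hb : 0 ≤ b)
    (hx : ‖x‖ ≤ R) (hl₀ : 0 ≤ l) (hl : b ≠ 0 → l ≤ ‖∇ φ x‖) :
    l * -(2 * a * b * fderiv ℝ φ x x) ≤ 2 * R * (b * ‖∇ φ x‖ ^ 2) := by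
  have hD : |fderiv ℝ φ x x| ≤ ‖∇ φ x‖ * R := by
    rw [norm_gradient_eq_norm_fderiv]
    exact (fderiv ℝ φ x).le_opNorm_of_le hx
  have hlb : l * b ≤ ‖∇ φ x‖ * b := by
    rcases eq_or_ne b 0 with rfl | hb₀
    · simp
    · exact mul_le_mul_of_nonneg_right (hl hb₀) hb
  calc l * -(2 * a * b * fderiv ℝ φ x x)
      ≤ |l * -(2 * a * b * fderiv ℝ φ x x)| := le_abs_self _
    _ = 2 * (|a| * (l * b) * |fderiv ℝ φ x x|) := by
        simp only [abs_mul, abs_neg, abs_of_nonneg hl₀, abs_of_nonneg hb, abs_two]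
        ring
    _ ≤ 2 * (1 * (‖∇ φ x‖ * b) * (‖∇ φ x‖ * R)) := by gcongr
    _ = 2 * R * (b * ‖∇ φ x‖ ^ 2) := by ring

end Gradient

variable [FiniteDimensional ℝ E] {φ : E → ℝ}

theorem divergence_gradient (hφ : ContDiff ℝ 2 φ) : divergence (∇ φ) = Δ φ := by
  ext x
  have hφ' : DifferentiableAt ℝ (fderiv ℝ φ) x :=
    (hφ.fderiv_right (m := 1) le_rfl).differentiable one_ne_zero x
  have hgrad : HasFDerivAt (∇ φ) _ x :=
    (toDual ℝ E).symm.toContinuousLinearEquiv.toContinuousLinearMap.hasFDerivAt.comp x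
      hφ'.hasFDerivAt
  rw [laplacian_eq_iteratedFDeriv_stdOrthonormalBasis, divergence,
    LinearMap.trace_eq_sum_inner _ (stdOrthonormalBasis ℝ E), hgrad.fderiv]
  refine Finset.sum_congr rfl fun i _ => ?_
  rw [iteratedFDeriv_two_apply, real_inner_comm]
  exact toDual_symm_apply

theorem continuous_laplacian (hφ : ContDiff ℝ 2 φ) : Continuous (Δ φ) :=
  divergence_gradient hφ ▸ continuous_divergence (contDiff_gradient hφ)

end Laplacian

section LowerBound

open scoped Laplacian Gradient

variable {E : Type*} [NormedAddCommGroup E] [InnerProductSpace ℝ E] [FiniteDimensional ℝ E]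
  {Ω : Set E} {φ : E → ℝ} {g : ℝ → ℝ} {m R : ℝ}

theorem exists_pos_forall_abs_lt_imp_le_norm_gradient (hΩ : IsOpen Ω)
    (hΩb : Bornology.IsBounded Ω) (hφ : ContDiff ℝ 1 φ) (hφΩ : ∀ x ∈ Ω, φ x ≠ 0)
    (hgrad : ∀ x ∈ frontier Ω, m ≤ ‖∇ φ x‖) {l : ℝ} (hl : l < m) :
    ∃ δ > 0, ∀ x ∈ Ω, |φ x| < δ → l ≤ ‖∇ φ x‖ := by
  have hcont : Continuous fun x => ‖∇ φ x‖ := (contDiff_gradient (n := 0) hφ).continuous.norm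
  have hcompact : IsCompact (closure Ω ∩ {x | ‖∇ φ x‖ ≤ l}) :=
    hΩb.isCompact_closure.inter_right (isClosed_le hcont continuous_const)
  obtain ⟨δ, hδ, hδφ⟩ := hcompact.exists_forall_le' hφ.continuous.abs.continuousOn (a := 0) <| by
    rintro x ⟨hxc, hxl : ‖∇ φ x‖ ≤ l⟩
    refine abs_pos.2 (hφΩ x ?_)
    by_contra hx
    exact (hxl.trans_lt hl).not_ge (hgrad x (hΩ.frontier_eq ▸ ⟨hxc, hx⟩))
  refine ⟨δ, hδ, fun x hx hxδ => ?_⟩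
  by_contra! hxl
  exact hxδ.not_ge (hδφ x ⟨subset_closure hx, hxl.le⟩)

variable [MeasurableSpace E] [BorelSpace E] (μ : Measure E) [μ.IsAddHaarMeasure]

theorem setIntegral_deriv_comp_mul_norm_gradient_sq (hΩ : IsOpen Ω) (hΩb : Bornology.IsBounded Ω)
    (hφ : ContDiff ℝ 2 φ) (hφ0 : ∀ x ∈ frontier Ω, φ x = 0) (hg : ContDiff ℝ 1 g)
    (hg0 : g =ᶠ[𝓝 0] 0) :
    ∫ x in Ω, deriv g (φ x) * ‖∇ φ x‖ ^ 2 ∂μ = -∫ x in Ω, g (φ x) * Δ φ x ∂μ := by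
  rw [← divergence_gradient hφ, ← setIntegral_deriv_comp_mul_fderiv_apply μ hΩ hΩb
    (hφ.of_le one_le_two) hφ0 hg hg0 (contDiff_gradient hφ)]
  simp only [fderiv_apply_gradient]

theorem mul_finrank_mul_setIntegral_sq_comp_le (hΩ : IsOpen Ω) (hΩb : Bornology.IsBounded Ω)
    (hR : ∀ x ∈ Ω, ‖x‖ ≤ R) (hR₀ : 0 ≤ R) (hφ : ContDiff ℝ 2 φ)
    (hφ0 : ∀ x ∈ frontier Ω, φ x = 0) (hg : ContDiff ℝ 1 g) (hg0 : g =ᶠ[𝓝 0] 0)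
    (hgmono : Monotone g) (hg1 : ∀ t, |g t| ≤ 1) {l : ℝ} (hl₀ : 0 ≤ l)
    (hl : ∀ x ∈ Ω, deriv g (φ x) ≠ 0 → l ≤ ‖∇ φ x‖) :
    l * (finrank ℝ E * ∫ x in Ω, g (φ x) ^ 2 ∂μ) ≤ 2 * R * ∫ x in Ω, |Δ φ x| ∂μ := by
  have hint {f : E → ℝ} (hf : Continuous f) : IntegrableOn f Ω μ :=
    integrableOn_of_continuous_of_isBounded hf hΩb
  have hφ1 : ContDiff ℝ 1 φ := hφ.of_le one_le_two
  have hDφ : Continuous fun x => fderiv ℝ φ x x :=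
    (hφ1.continuous_fderiv one_ne_zero).clm_apply continuous_id
  have hgrad : Continuous (∇ φ) := (contDiff_gradient (n := 1) hφ).continuous
  have hΔ : Continuous (Δ φ) := continuous_laplacian hφ
  calc l * (finrank ℝ E * ∫ x in Ω, g (φ x) ^ 2 ∂μ)
      = ∫ x in Ω, l * -(2 * g (φ x) * deriv g (φ x) * fderiv ℝ φ x x) ∂μ := by
        rw [finrank_mul_setIntegral_sq_comp μ hΩ hΩb hφ1 hφ0 hg hg0, integral_const_mul,
          integral_neg]
    _ ≤ ∫ x in Ω, 2 * R * (deriv g (φ x) * ‖∇ φ x‖ ^ 2) ∂μ :=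
        setIntegral_mono_on (hint (by fun_prop)) (hint (by fun_prop)) hΩ.measurableSet
          fun x hx => mul_neg_fderiv_apply_self_le (hg1 _) hgmono.deriv_nonneg (hR x hx) hl₀
            (hl x hx)
    _ = 2 * R * ∫ x in Ω, -(g (φ x) * Δ φ x) ∂μ := by
        rw [integral_const_mul, setIntegral_deriv_comp_mul_norm_gradient_sq μ hΩ hΩb hφ hφ0 hg hg0,
          integral_neg]
    _ ≤ 2 * R * ∫ x in Ω, |Δ φ x| ∂μ := by
        refine mul_le_mul_of_nonneg_left (setIntegral_mono (hint (by fun_prop))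
          (hint hΔ.abs) fun x => (neg_le_abs _).trans ?_) (by positivity)
        rw [abs_mul]
        exact mul_le_of_le_one_left (abs_nonneg _) (hg1 _)

theorem mul_finrank_mul_measureReal_le_of_isCompact (hΩ : IsOpen Ω) (hΩb : Bornology.IsBounded Ω)
    (hR : ∀ x ∈ Ω, ‖x‖ ≤ R) (hR₀ : 0 ≤ R) (hφ : ContDiff ℝ 2 φ)
    (hφ0 : ∀ x ∈ frontier Ω, φ x = 0) (hφΩ : ∀ x ∈ Ω, φ x ≠ 0) (hm : 0 < m)
    (hgrad : ∀ x ∈ frontier Ω, m ≤ ‖∇ φ x‖) {K : Set E} (hK : IsCompact K) (hKΩ : K ⊆ Ω) :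
    m * finrank ℝ E * μ.real K ≤ 4 * R * ∫ x in Ω, |Δ φ x| ∂μ := by
  obtain ⟨δ, hδ, hδφ⟩ := exists_pos_forall_abs_lt_imp_le_norm_gradient hΩ hΩb
    (hφ.of_le one_le_two) hφΩ hgrad (half_lt_self hm)
  obtain ⟨η, hη, hηφ⟩ := hK.exists_forall_le' hφ.continuous.abs.continuousOn
    fun x hx => abs_pos.2 (hφΩ x (hKΩ hx))
  set ε := min δ η / 2
  have hε : 0 < ε := half_pos (lt_min hδ hη)
  have hεδ : 2 * ε ≤ δ := (mul_div_cancel₀ _ two_ne_zero).trans_le (min_le_left δ η)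
  have hεη : 2 * ε ≤ η := (mul_div_cancel₀ _ two_ne_zero).trans_le (min_le_right δ η)
  have hg0 : signTruncation ε =ᶠ[𝓝 0] 0 := by
    filter_upwards [closedBall_mem_nhds 0 hε] with t ht
    exact signTruncation_eq_zero_of_abs_le hε (mem_closedBall_zero_iff.1 ht)
  have hsq : μ.real K ≤ ∫ x in Ω, signTruncation ε (φ x) ^ 2 ∂μ := by
    have hint : IntegrableOn (fun x => signTruncation ε (φ x) ^ 2) Ω μ :=
      integrableOn_of_continuous_of_isBounded
        (((contDiff_signTruncation (n := 0)).continuous.comp hφ.continuous).pow 2) hΩb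
    calc μ.real K = ∫ x in K, signTruncation ε (φ x) ^ 2 ∂μ := by
          rw [setIntegral_congr_fun hK.measurableSet fun x hx =>
            signTruncation_sq_eq_one_of_le_abs hε (hεη.trans (hηφ x hx))]
          simp
      _ ≤ ∫ x in Ω, signTruncation ε (φ x) ^ 2 ∂μ :=
          setIntegral_mono_set hint (.of_forall fun _ => sq_nonneg _) hKΩ.eventuallyLE
  have hmain := mul_finrank_mul_setIntegral_sq_comp_le μ hΩ hΩb hR hR₀ hφ hφ0
    contDiff_signTruncation hg0 (monotone_signTruncation hε.le) (fun _ => abs_signTruncation_le_one)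
    (half_pos hm).le fun x hx hx' => hδφ x hx <| lt_of_not_ge fun h =>
      hx' (deriv_signTruncation_eq_zero_of_le_abs hε (hεδ.trans h))
  have := mul_le_mul_of_nonneg_left hsq (show 0 ≤ m * finrank ℝ E by positivity)
  linarith

theorem mul_finrank_mul_measureReal_le (hΩ : IsOpen Ω) (hΩb : Bornology.IsBounded Ω)
    (hR : ∀ x ∈ Ω, ‖x‖ ≤ R) (hR₀ : 0 ≤ R) (hφ : ContDiff ℝ 2 φ)
    (hφ0 : ∀ x ∈ frontier Ω, φ x = 0) (hφΩ : ∀ x ∈ Ω, φ x ≠ 0) (hm : 0 < m)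
    (hgrad : ∀ x ∈ frontier Ω, m ≤ ‖∇ φ x‖) :
    m * finrank ℝ E * μ.real Ω ≤ 4 * R * ∫ x in Ω, |Δ φ x| ∂μ :=
  mul_measureReal_le_of_forall_isCompact hΩ (by positivity) fun _ hKΩ hK =>
    mul_finrank_mul_measureReal_le_of_isCompact μ hΩ hΩb hR hR₀ hφ hφ0 hφΩ hm hgrad hK hKΩ

theorem sq_mul_finrank_mul_measureReal_le (hΩ : IsOpen Ω) (hΩb : Bornology.IsBounded Ω)
    (hR : ∀ x ∈ Ω, ‖x‖ ≤ R) (hR₀ : 0 ≤ R) (hφ : ContDiff ℝ 2 φ)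
    (hφ0 : ∀ x ∈ frontier Ω, φ x = 0) (hφΩ : ∀ x ∈ Ω, φ x ≠ 0) (hm : 0 < m)
    (hgrad : ∀ x ∈ frontier Ω, m ≤ ‖∇ φ x‖) :
    (m * finrank ℝ E) ^ 2 * μ.real Ω ≤ (4 * R) ^ 2 * ∫ x in Ω, Δ φ x ^ 2 ∂μ := by
  rcases measureReal_nonneg.eq_or_lt with hA | hA
  · rw [← hA, mul_zero]
    positivity
  have hΩfin : IsFiniteMeasure (μ.restrict Ω) := ⟨by simpa using hΩb.measure_lt_top⟩
  have hL2 : MemLp (fun x => |Δ φ x|) 2 (μ.restrict Ω) :=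
    (memLp_two_iff_integrable_sq (continuous_laplacian hφ).abs.aestronglyMeasurable).2
      (integrableOn_of_continuous_of_isBounded ((continuous_laplacian hφ).abs.pow 2) hΩb)
  have hCS := sq_integral_le_measureReal_univ_mul_integral_sq hL2
  simp only [sq_abs, measureReal_restrict_apply_univ] at hCS
  refine le_of_mul_le_mul_left ?_ hA
  calc μ.real Ω * ((m * finrank ℝ E) ^ 2 * μ.real Ω)
      = (m * finrank ℝ E * μ.real Ω) ^ 2 := by ring
    _ ≤ (4 * R * ∫ x in Ω, |Δ φ x| ∂μ) ^ 2 :=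
        pow_le_pow_left₀ (by positivity)
          (mul_finrank_mul_measureReal_le μ hΩ hΩb hR hR₀ hφ hφ0 hφΩ hm hgrad) 2
    _ = (4 * R) ^ 2 * (∫ x in Ω, |Δ φ x| ∂μ) ^ 2 := mul_pow _ _ 2
    _ ≤ (4 * R) ^ 2 * (μ.real Ω * ∫ x in Ω, Δ φ x ^ 2 ∂μ) := by gcongr
    _ = μ.real Ω * ((4 * R) ^ 2 * ∫ x in Ω, Δ φ x ^ 2 ∂μ) := by ring

end LowerBound

section Perimeter

theorem setOf_mem_closure_and_eq_zero_subset_frontier {X : Type*} [TopologicalSpace X] {Ω : Set X}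
    {φ : X → ℝ} (hΩ : IsOpen Ω) (hφΩ : ∀ x ∈ Ω, φ x ≠ 0) :
    {x ∈ closure Ω | φ x = 0} ⊆ frontier Ω := fun x ⟨hxc, hx0⟩ =>
  hΩ.frontier_eq ▸ ⟨hxc, fun hx => hφΩ x hx hx0⟩

theorem finrank_pos_of_nonempty_frontier {E : Type*} [NormedAddCommGroup E] [NormedSpace ℝ E]
    [FiniteDimensional ℝ E] {Ω : Set E} (h : (frontier Ω).Nonempty) : 0 < finrank ℝ E := by
  by_contra! hE
  have := finrank_zero_iff.1 (Nat.le_zero.1 hE)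
  obtain ⟨x, hx⟩ := h
  rcases Ω.eq_empty_or_nonempty with rfl | hΩ
  · simp at hx
  · simp [Subsingleton.eq_univ_of_nonempty hΩ] at hx

open scoped Laplacian Gradient

variable {E : Type*} [NormedAddCommGroup E] [InnerProductSpace ℝ E] [FiniteDimensional ℝ E]
  [MeasurableSpace E] [BorelSpace E] {Ω : Set E} {φ : E → ℝ}

theorem hausdorffMeasure_frontier_lt_top (hΩb : Bornology.IsBounded Ω) (hφ : ContDiff ℝ 1 φ)
    (hφ0 : ∀ x ∈ frontier Ω, φ x = 0) (hgrad : ∀ x ∈ frontier Ω, ∇ φ x ≠ 0) :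
    μH[(finrank ℝ E : ℝ) - 1] (frontier Ω) < ⊤ := by
  have hK : IsCompact (frontier Ω) :=
    hΩb.isCompact_closure.of_isClosed_subset isClosed_frontier frontier_subset_closure
  have hrange (x) (hx : x ∈ frontier Ω) : (fderiv ℝ φ x).range = ⊤ := by
    have hDφ : fderiv ℝ φ x ≠ 0 := by
      rw [← norm_ne_zero_iff, ← norm_gradient_eq_norm_fderiv, norm_ne_zero_iff]
      exact hgrad x hx
    exact Dual.range_eq_top_of_ne_zero (ContinuousLinearMap.coe_injective.ne hDφ)
  simpa using hausdorffMeasure_lt_top_of_isCompact_of_subset_preimage hK hφ0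
    (fun x _ => hφ.contDiffAt.hasStrictFDerivAt one_ne_zero) hrange

theorem stmt_2_general (μ : Measure E) [μ.IsAddHaarMeasure] (hΩ : IsOpen Ω)
    (hΩb : Bornology.IsBounded Ω) :
    ∃ K > 0, ∀ m > 0, ∀ φ : E → ℝ, ContDiff ℝ 2 φ →
      (∀ x ∈ frontier Ω, φ x = 0) →
      (∀ x ∈ Ω, φ x ≠ 0) →
      (∀ x ∈ frontier Ω, m ≤ ‖∇ φ x‖) →
      μH[(finrank ℝ E : ℝ) - 1] {x ∈ closure Ω | φ x = 0} ≤
        ENNReal.ofReal (K / m ^ 2 * ∫ x in Ω, Δ φ x ^ 2 ∂μ) := by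
  obtain ⟨R, hR₀, hR⟩ := hΩb.exists_pos_norm_le
  -- If this measure is infinite then `H = 0`, but by `hausdorffMeasure_frontier_lt_top` there is no
  -- admissible `φ` in that case.
  set H := (μH[(finrank ℝ E : ℝ) - 1] (frontier Ω)).toReal
  rcases (frontier Ω).eq_empty_or_nonempty with hempty | hne
  · refine ⟨1, one_pos, fun m _ φ _ _ hφΩ _ => ?_⟩
    have := setOf_mem_closure_and_eq_zero_subset_frontier hΩ hφΩ
    rw [hempty, subset_empty_iff] at this
    simp [this]
  have hn : (0 : ℝ) < finrank ℝ E := Nat.cast_pos.2 (finrank_pos_of_nonempty_frontier hne)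
  have hA : 0 < μ.real Ω :=
    ENNReal.toReal_pos (hΩ.measure_pos μ (closure_nonempty_iff.1
      (hne.mono frontier_subset_closure))).ne' hΩb.measure_lt_top.ne
  refine ⟨(H + 1) * (4 * R) ^ 2 / (finrank ℝ E ^ 2 * μ.real Ω), by positivity,
    fun m hm φ hφ hφ0 hφΩ hgrad => ?_⟩
  have hfin := hausdorffMeasure_frontier_lt_top hΩb (hφ.of_le one_le_two) hφ0
    fun x hx => norm_pos_iff.1 (hm.trans_le (hgrad x hx))
  refine (measure_mono (setOf_mem_closure_and_eq_zero_subset_frontier hΩ hφΩ)).trans ?_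
  refine ENNReal.le_ofReal_iff_toReal_le hfin.ne (by positivity) |>.2 ?_
  have hΔ := sq_mul_finrank_mul_measureReal_le μ hΩ hΩb hR hR₀.le hφ hφ0 hφΩ hm hgrad
  calc H ≤ H + 1 := le_add_of_nonneg_right zero_le_one
    _ = (H + 1) / ((m * finrank ℝ E) ^ 2 * μ.real Ω) * ((m * finrank ℝ E) ^ 2 * μ.real Ω) := by
        field_simp
    _ ≤ (H + 1) / ((m * finrank ℝ E) ^ 2 * μ.real Ω) *
          ((4 * R) ^ 2 * ∫ x in Ω, Δ φ x ^ 2 ∂μ) := by gcongr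
    _ = _ := by field_simp

theorem laplacian_eq_innerProductSpace_laplacian {n : ℕ} (φ : EuclideanSpace ℝ (Fin n) → ℝ) :
    laplacian φ = Δ φ := by
  ext x
  simp [laplacian, laplacian_eq_iteratedFDeriv_orthonormalBasis φ (EuclideanSpace.basisFun _ ℝ)]

end Perimeter

/-- For a bounded domain Ω with (C^{1,1}) boundary and m > 0, there is a constant C > 0,
depending only on Ω and m, such that for every φ ∈ C² vanishing on ∂Ω, nonzero in the
interior of Ω, with |∇φ| ≥ m on ∂Ω, the (n−1)-dimensional measure of the zero level set
of φ (which, by the coarea interpretation, equals ∫_Ω δ(φ)|∇φ| dx) is bounded by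
C ∫_Ω |Δφ|² dx. -/
theorem stmt_2 {n : ℕ} (Ω : Set (EuclideanSpace ℝ (Fin n)))
    (hΩopen : IsOpen Ω) (hΩbdd : Bornology.IsBounded Ω)
    (m : ℝ) (hm : 0 < m) :
    ∃ C > 0, ∀ φ : EuclideanSpace ℝ (Fin n) → ℝ, ContDiff ℝ 2 φ →
      (∀ x ∈ frontier Ω, φ x = 0) →
      (∀ x ∈ Ω, φ x ≠ 0) →
      (∀ x ∈ frontier Ω, m ≤ ‖gradient φ x‖) →
      μH[(n : ℝ) - 1] {x ∈ closure Ω | φ x = 0} ≤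
        ENNReal.ofReal (C * ∫ x in Ω, (laplacian φ x) ^ 2) := by
  obtain ⟨K, hK, hbound⟩ := stmt_2_general volume hΩopen hΩbdd
  refine ⟨K / m ^ 2, by positivity, fun φ hφ hφ0 hφΩ hgrad => ?_⟩
  simpa only [finrank_euclideanSpace_fin, laplacian_eq_innerProductSpace_laplacian] using
    hbound m hm φ hφ hφ0 hφΩ hgrad
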